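/- Let R : ℝ → ℝ be twice continuously differentiable, 2-periodic, and strictly positive, and set w(x) = R'(x)·(1 − R(x)R''(x) + R'(x)²) / (R(x)·(1 + R'(x)²)). If s : ℝ → ℝ is twice continuously differentiable, 2-periodic, and satisfies s''(x) + w(x)·s'(x) + w(x) = 0 for all x, then s'(x) = c₃·√(1 + R'(x)²)/R(x) − 1 for all x, where c₃ = 2·(∫_{−1}^{1} √(1+R'(x)²)/R(x) dx)⁻¹. -/

import Mathlib

open MeasureTheory intervalIntegral

/-!
A surface of revolution is conformal to a cylinder through its isothermal meridian coordinate
`t = ∫ √(1 + R'²) / R dx`, and a rotationally symmetric function is harmonic exactly when it is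
affine in `t`. The equation for `s` says that `x + s` is harmonic, so `1 + s'` is a constant
multiple of `dt/dx`. The constant is found by integrating over a period, across which `s` returns
to its initial value.
-/

section FirstOrderLinear

variable {𝕜 E : Type*} [RCLike 𝕜] [NormedAddCommGroup E] [NormedSpace 𝕜 E]

theorem exists_forall_eq_smul_of_hasDerivAt_smul {k g : 𝕜 → 𝕜} {f : 𝕜 → E}
    (hg : ∀ x, HasDerivAt g (k x * g x) x) (hg₀ : ∀ x, g x ≠ 0)
    (hf : ∀ x, HasDerivAt f (k x • f x) x) : ∃ v : E, ∀ x, f x = g x • v := by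
  have hquot (x : 𝕜) : HasDerivAt (fun y ↦ (g y)⁻¹ • f y) 0 x := by
    refine (((hg x).fun_inv (hg₀ x)).fun_smul (hf x)).congr_deriv ?_
    rw [smul_smul, ← add_smul]
    have hcancel : (g x)⁻¹ * k x + -(k x * g x) / g x ^ 2 = 0 := by
      field_simp [hg₀ x]
      ring
    rw [hcancel, zero_smul]
  refine ⟨(g 0)⁻¹ • f 0, fun x ↦ ?_⟩
  have hconst : (g x)⁻¹ • f x = (g 0)⁻¹ • f 0 :=
    is_const_of_deriv_eq_zero (fun y ↦ (hquot y).differentiableAt) (fun y ↦ (hquot y).deriv) x 0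
  rw [← hconst, smul_inv_smul₀ (hg₀ x)]

end FirstOrderLinear

section IntervalIntegral

variable {a b : ℝ}

theorem eq_integral_mul_inv_integral_of_forall_eq_mul {μ : Measure ℝ} {f g : ℝ → ℝ} {c : ℝ}
    (hfg : ∀ x, f x = g x * c) (hf : ∫ x in a..b, f x ∂μ ≠ 0) :
    c = (∫ x in a..b, f x ∂μ) * (∫ x in a..b, g x ∂μ)⁻¹ := by
  have hint : ∫ x in a..b, f x ∂μ = (∫ x in a..b, g x ∂μ) * c := by
    simp only [hfg, intervalIntegral.integral_mul_const]
  have hg : ∫ x in a..b, g x ∂μ ≠ 0 := left_ne_zero_of_mul (hint ▸ hf)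
  rw [hint, mul_right_comm, mul_inv_cancel₀ hg, one_mul]

theorem integral_deriv_add_const_of_eq {s : ℝ → ℝ}
    (hs : ∀ x ∈ Set.uIcc a b, DifferentiableAt ℝ s x)
    (hs' : IntervalIntegrable (deriv s) volume a b) (hsab : s a = s b) (c : ℝ) :
    ∫ x in a..b, (deriv s x + c) = (b - a) * c := by
  rw [integral_add hs' intervalIntegrable_const, integral_deriv_eq_sub hs hs', hsab, sub_self,
    zero_add, intervalIntegral.integral_const, smul_eq_mul]

end IntervalIntegral

theorem hasDerivAt_sqrt_one_add_sq {f : ℝ → ℝ} {f' x : ℝ} (hf : HasDerivAt f f' x) :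
    HasDerivAt (fun y ↦ √(1 + f y ^ 2)) (f x * f' / √(1 + f x ^ 2)) x := by
  refine (((hf.fun_pow 2).const_add 1).sqrt (by positivity)).congr_deriv ?_
  push_cast
  ring

/-- The derivative `√(1 + R'²) / R` of the isothermal meridian coordinate, with respect to the
axial coordinate, on the surface of revolution with radius profile `R`. -/
noncomputable def isothermalDensity (R : ℝ → ℝ) (x : ℝ) : ℝ :=
  √(1 + deriv R x ^ 2) / R x

/-- The coefficient `w` of the first-order term in the axial Laplace equation `y'' + w y' = 0` for
rotationally symmetric functions on the surface of revolution with radius profile `R`. -/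
noncomputable def axialDrift (R : ℝ → ℝ) (x : ℝ) : ℝ :=
  deriv R x * (1 - R x * deriv (deriv R) x + deriv R x ^ 2) / (R x * (1 + deriv R x ^ 2))

theorem isothermalDensity_ne_zero {R : ℝ → ℝ} {x : ℝ} (hx : R x ≠ 0) :
    isothermalDensity R x ≠ 0 :=
  div_ne_zero (by positivity) hx

theorem hasDerivAt_isothermalDensity {R : ℝ → ℝ} {x : ℝ} (hR : DifferentiableAt ℝ R x)
    (hR' : DifferentiableAt ℝ (deriv R) x) (hx : R x ≠ 0) :
    HasDerivAt (isothermalDensity R) (-axialDrift R x * isothermalDensity R x) x := by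
  refine ((hasDerivAt_sqrt_one_add_sq hR'.hasDerivAt).fun_div hR.hasDerivAt hx).congr_deriv ?_
  have hsqrt : √(1 + deriv R x ^ 2) ≠ 0 := by positivity
  have hsq : √(1 + deriv R x ^ 2) ^ 2 = 1 + deriv R x ^ 2 := Real.sq_sqrt (by positivity)
  have hone : 1 + deriv R x ^ 2 ≠ 0 := by positivity
  unfold axialDrift isothermalDensity
  field_simp
  rw [hsq]
  ring

theorem revolution_ode_unique_deriv_general {R s : ℝ → ℝ} {a b : ℝ} (hab : a ≠ b)
    (hR : Differentiable ℝ R) (hR' : Differentiable ℝ (deriv R)) (hR₀ : ∀ x, R x ≠ 0)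
    (hs : Differentiable ℝ s) (hs' : Differentiable ℝ (deriv s)) (hsab : s a = s b)
    (hode : ∀ x, deriv (deriv s) x + axialDrift R x * deriv s x + axialDrift R x = 0) (x : ℝ) :
    deriv s x =
      (b - a) * (∫ y in a..b, isothermalDensity R y)⁻¹ * isothermalDensity R x - 1 := by
  have hderiv (y : ℝ) :
      HasDerivAt (fun z ↦ deriv s z + 1) (-axialDrift R y • (deriv s y + 1)) y := by
    refine ((hs' y).hasDerivAt.add_const 1).congr_deriv ?_
    rw [smul_eq_mul]
    linear_combination hode y
  obtain ⟨c, hc⟩ := exists_forall_eq_smul_of_hasDerivAt_smul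
    (fun y ↦ hasDerivAt_isothermalDensity (hR y) (hR' y) (hR₀ y))
    (fun y ↦ isothermalDensity_ne_zero (hR₀ y)) hderiv
  have hint : ∫ y in a..b, (deriv s y + 1) = b - a := by
    simpa only [mul_one] using integral_deriv_add_const_of_eq (fun y _ ↦ hs y)
      (hs'.continuous.intervalIntegrable a b) hsab 1
  have hconst : c = (b - a) * (∫ y in a..b, isothermalDensity R y)⁻¹ := by
    rw [← hint]
    exact eq_integral_mul_inv_integral_of_forall_eq_mul hc (hint ▸ sub_ne_zero.mpr hab.symm)
  rw [← hconst, mul_comm, ← smul_eq_mul, ← hc, add_sub_cancel_right]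

/-- For a positive, 2-periodic, `C²` radius profile `R`, any 2-periodic `C²` solution `s` of
`s'' + w s' + w = 0`, where `w = R'(1 − R R'' + R'²)/(R (1 + R'²))`, has derivative
`s'(x) = c₃ √(1+R'(x)²)/R(x) − 1` with `c₃ = 2 (∫_{−1}^{1} √(1+R'²)/R)⁻¹`. -/
theorem revolution_ode_unique_deriv
    (R : ℝ → ℝ) (hR : ContDiff ℝ 2 R) (hper : ∀ x, R (x + 2) = R x) (hpos : ∀ x, 0 < R x)
    (w : ℝ → ℝ)
    (hw : ∀ x, w x = deriv R x * (1 - R x * deriv (deriv R) x + (deriv R x) ^ 2) /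
      (R x * (1 + (deriv R x) ^ 2)))
    (s : ℝ → ℝ) (hs : ContDiff ℝ 2 s) (hsper : ∀ x, s (x + 2) = s x)
    (hode : ∀ x, deriv (deriv s) x + w x * deriv s x + w x = 0) :
    ∀ x, deriv s x =
      2 * (∫ y in (-1 : ℝ)..1, Real.sqrt (1 + (deriv R y) ^ 2) / R y)⁻¹ *
        Real.sqrt (1 + (deriv R x) ^ 2) / R x - 1 := by
  obtain rfl : w = axialDrift R := funext hw
  have hsab : s (-1) = s 1 := by rw [← hsper (-1)]; norm_num
  intro x
  rw [revolution_ode_unique_deriv_general (by norm_num) (hR.differentiable two_ne_zero)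
    hR.differentiable_deriv_two (fun y ↦ (hpos y).ne') (hs.differentiable two_ne_zero)
    hs.differentiable_deriv_two hsab hode x, mul_div_assoc, sub_neg_eq_add, one_add_one_eq_two]
  rfl
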